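/- For any T ≥ 1 and any ε ∈ (0,1], the sum ∑_{t=1}^{T} ε(1-ε)^{t-1} (T - t) is at least (ε T²)/8 whenever εT ≤ 1 and T ≥ 4. (This gives the Ω(εT²) compounding-error lower bound in the Unicycle MDP.) -/

import Mathlib

theorem aux_sum (ε c : ℝ) (n : ℕ) :
    ∑ t ∈ Finset.range n, ε * (1 - ε * t) * (c - ((t : ℝ) + 1)) =
      ε * ((n * (c - 1) - n * ((n : ℝ) - 1) / 2)
        - ε * ((c - 1) * n * ((n : ℝ) - 1) / 2 - ((n : ℝ) - 1) * n * (2 * n - 1) / 6)) := by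
  induction n with
  | zero => simp
  | succ k ih =>
    rw [Finset.sum_range_succ, ih]
    push_cast
    ring

/-- ∑_{t=1}^{T} ε(1-ε)^{t-1}(T - t) ≥ εT²/8 when 0 < ε ≤ 1, εT ≤ 1, T ≥ 4. -/
theorem unicycle_compounding_lower_bound (T : ℕ) (hT : 4 ≤ T) (ε : ℝ)
    (hε : 0 < ε) (hε1 : ε ≤ 1) (hεT : ε * T ≤ 1) :
    ε * (T : ℝ) ^ 2 / 8 ≤
      ∑ t ∈ Finset.range T, ε * (1 - ε) ^ t * ((T : ℝ) - (t + 1)) := by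
  have hT' : (4 : ℝ) ≤ T := by exact_mod_cast hT
  have h1 : ∑ t ∈ Finset.range T, ε * (1 - ε * t) * ((T : ℝ) - ((t : ℝ) + 1)) ≤
      ∑ t ∈ Finset.range T, ε * (1 - ε) ^ t * ((T : ℝ) - (t + 1)) := by
    apply Finset.sum_le_sum
    intro t ht
    have ht' : ((t : ℝ) + 1) ≤ T := by exact_mod_cast Finset.mem_range.mp ht
    have hb := one_add_mul_le_pow (a := -ε) (by linarith) t
    have hb' : 1 - ε * t ≤ (1 - ε) ^ t := by
      have e : 1 + -ε = 1 - ε := by ring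
      rw [e] at hb
      linarith
    exact mul_le_mul_of_nonneg_right (mul_le_mul_of_nonneg_left hb' hε.le) (by linarith)
  refine le_trans ?_ h1
  rw [aux_sum, mul_div_assoc]
  apply mul_le_mul_of_nonneg_left _ hε.le
  have h2 : 0 ≤ (1 - ε * T) * (((T : ℝ) - 1) * (T - 2)) :=
    mul_nonneg (by linarith) (mul_nonneg (by linarith) (by linarith))
  nlinarith [h2]
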